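/- Let g : ℝ^d → Y be a measurable function into a finite label set Y, let σ > 0, and define the randomized classifier M(X) as the distribution of g(X + z) with z ∼ N(0, σ²I_d). Let X ∈ ℝ^d, y₊ ∈ Y, and p₊, p₋ ∈ (0,1) satisfy P(M(X) = y₊) ≥ p₊ ≥ p₋ ≥ max_{y ≠ y₊} P(M(X) = y). Set r_X = (σ/2)(Φ⁻¹(p₊) − Φ⁻¹(p₋)). Then for every e ∈ ℝ^d with ‖e‖₂ ≤ r_X and every y ∈ Y, P(g(X + e + z) = y₊) ≥ P(g(X + e + z) = y); that is, y₊ remains a most probable class of the smoothed classifier at X + e. -/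

import Mathlib

open MeasureTheory ProbabilityTheory Real
open scoped NNReal ENNReal

/-- Standard normal CDF Φ. -/
noncomputable def Phi (x : ℝ) : ℝ := ((gaussianReal 0 1) (Set.Iic x)).toReal

/-- Inverse of the standard normal CDF, Φ⁻¹. -/
noncomputable def PhiInv (q : ℝ) : ℝ := Function.invFun Phi q

/-- The trade-off function of the Gaussian mechanism, `G_μ(α) = Φ(Φ⁻¹(1-α) − μ)`. -/
noncomputable def Gmu (μ α : ℝ) : ℝ := Phi (PhiInv (1 - α) - μ)

/-- Euclidean (L2) norm on `ℝ^n`. -/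
noncomputable def l2norm {n : ℕ} (x : Fin n → ℝ) : ℝ := Real.sqrt (∑ i, (x i) ^ 2)

/-- Maximum (L∞) norm on `ℝ^n`. -/
noncomputable def linftyNorm {n : ℕ} (x : Fin n → ℝ) : ℝ := ⨆ i, |x i|

/-- Lp norm on `ℝ^n`. -/
noncomputable def lpNorm {n : ℕ} (p : ℝ) (x : Fin n → ℝ) : ℝ := (∑ i, |x i| ^ p) ^ (1 / p)

/-- `T(P,Q) ≥ f`: every measurable `[0,1]`-valued test `φ` has type II error
`1 − ∫ φ dQ` at least `f` of its level `∫ φ dP`. -/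
def TradeoffGE {Ω : Type*} [MeasurableSpace Ω] (P Q : Measure Ω) (f : ℝ → ℝ) : Prop :=
  ∀ φ : Ω → ℝ, Measurable φ → (∀ ω, φ ω ∈ Set.Icc (0 : ℝ) 1) →
    1 - ∫ ω, φ ω ∂Q ≥ f (∫ ω, φ ω ∂P)

/-- The Gaussian measure `N(v, s·I_d)` on `ℝ^d` (spherical covariance `s ≥ 0`). -/
noncomputable def gaussPi (d : ℕ) (v : Fin d → ℝ) (s : ℝ≥0) : Measure (Fin d → ℝ) :=
  Measure.pi fun i => gaussianReal (v i) s

/-!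
Under a shift of an isotropic Gaussian from mean `v` to mean `v + e`, the log-likelihood ratio is an
increasing affine function of `e ⬝ᵥ z`. By Neyman–Pearson, among all events of a given probability
under the original law, the half-space `{z | e ⬝ᵥ z ≤ c}` is therefore the one left least likely by
the shift, and on half-spaces the shift merely moves the argument of `Φ` by `‖e‖ / σ`. Hence the
probability of the class `y₊` stays at least `Φ(Φ⁻¹(p₊) - ‖e‖ / σ)` and, by complementation, that of
any other class stays at most `Φ(Φ⁻¹(p₋) + ‖e‖ / σ)`; for `‖e‖ ≤ (σ / 2)(Φ⁻¹(p₊) - Φ⁻¹(p₋))` the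
former bound is the larger one.
-/

open scoped Matrix

section Measure

theorem neyman_pearson_withDensity {Ω : Type*} [MeasurableSpace Ω] {μ : Measure Ω} {f : Ω → ℝ≥0∞}
    {k : ℝ≥0∞} {H A : Set Ω} (hH : MeasurableSet H) (hA : MeasurableSet A)
    (hf_le : ∀ x ∈ H, f x ≤ k) (le_hf : ∀ x ∉ H, k ≤ f x) (hfin : μ (H ∩ A) ≠ ∞)
    (hHA : μ H ≤ μ A) :
    μ.withDensity f H ≤ μ.withDensity f A := by
  have hdiff : μ (H \ A) ≤ μ (A \ H) := by
    rw [← measure_sdiff_add_inter H hA, ← measure_sdiff_add_inter A hH, Set.inter_comm A H] at hHA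
    exact (ENNReal.add_le_add_iff_right hfin).1 hHA
  rw [← measure_sdiff_add_inter H hA, ← measure_sdiff_add_inter A hH, Set.inter_comm A H]
  gcongr ?_ + _
  calc μ.withDensity f (H \ A)
    _ = ∫⁻ x in H \ A, f x ∂μ := withDensity_apply _ (hH.diff hA)
    _ ≤ ∫⁻ _ in H \ A, k ∂μ := setLIntegral_mono' (hH.diff hA) fun x hx ↦ hf_le x hx.1
    _ = k * μ (H \ A) := setLIntegral_const _ _
    _ ≤ k * μ (A \ H) := by gcongr
    _ = ∫⁻ _ in A \ H, k ∂μ := (setLIntegral_const _ _).symm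
    _ ≤ ∫⁻ x in A \ H, f x ∂μ := setLIntegral_mono' (hA.diff hH) fun x hx ↦ le_hf x hx.2
    _ = μ.withDensity f (A \ H) := (withDensity_apply _ (hA.diff hH)).symm

variable {ι : Type*} {E : ι → Type*} [∀ i, MeasurableSpace (E i)]
  {μ : ∀ i, Measure (E i)} [∀ i, SigmaFinite (μ i)] {f : ∀ i, E i → ℝ≥0∞}

theorem lmarginal_prod_eval [DecidableEq ι] (hf : ∀ i, Measurable (f i)) (s : Finset ι) :
    ∫⋯∫⁻_s, (fun x ↦ ∏ i ∈ s, f i (x i)) ∂μ = fun _ ↦ ∏ i ∈ s, ∫⁻ x, f i x ∂μ i := by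
  induction s using Finset.induction_on with
  | empty => simp
  | insert j s hj ih =>
    have hprod (x : ∀ i, E i) (y : E j) :
        ∏ i ∈ s, f i (Function.update x j y i) = ∏ i ∈ s, f i (x i) :=
      Finset.prod_congr rfl fun i hi ↦ by rw [Function.update_of_ne (ne_of_mem_of_not_mem hi hj)]
    ext x
    rw [lmarginal_insert' _ (by fun_prop) hj]
    simp only [Finset.prod_insert hj, Function.update_self, hprod, lintegral_mul_const _ (hf j)]
    rw [lmarginal, lintegral_const_mul _ (by fun_prop)]
    exact congrArg _ (congrFun ih x)

variable [Fintype ι]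

theorem lintegral_pi_prod_eval (hf : ∀ i, Measurable (f i)) :
    ∫⁻ x, ∏ i, f i (x i) ∂Measure.pi μ = ∏ i, ∫⁻ x, f i x ∂μ i := by
  classical
  rcases isEmpty_or_nonempty (∀ i, E i) with hE | ⟨⟨x⟩⟩
  · obtain ⟨i, hi⟩ := isEmpty_pi.1 hE
    rw [lintegral_of_isEmpty, Finset.prod_eq_zero (Finset.mem_univ i) (lintegral_of_isEmpty _ _)]
  · rw [lintegral_eq_lmarginal_univ x, lmarginal_prod_eval hf]

theorem pi_withDensity [∀ i, SigmaFinite ((μ i).withDensity (f i))] (hf : ∀ i, Measurable (f i)) :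
    Measure.pi (fun i ↦ (μ i).withDensity (f i)) =
      (Measure.pi μ).withDensity fun x ↦ ∏ i, f i (x i) := by
  refine Measure.pi_eq fun s hs ↦ ?_
  rw [withDensity_apply _ (.univ_pi hs), Measure.restrict_pi_pi, lintegral_pi_prod_eval hf]
  exact Finset.prod_congr rfl fun i _ ↦ (withDensity_apply _ (hs i)).symm

end Measure

section StdNormalCDF

theorem continuous_cdf (μ : Measure ℝ) [IsProbabilityMeasure μ] [NullSingletonClass μ] :
    Continuous (cdf μ) := by
  refine continuous_iff_continuousAt.2 fun x ↦ ?_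
  rw [(monotone_cdf μ).continuousAt_iff_leftLim_eq_rightLim, StieltjesFunction.rightLim_eq]
  have hjump : (cdf μ).measure {x} = 0 := by rw [measure_cdf, measure_singleton]
  rw [StieltjesFunction.measure_singleton, ENNReal.ofReal_eq_zero, sub_nonpos] at hjump
  exact ((monotone_cdf μ).leftLim_le le_rfl).antisymm hjump

theorem Ioo_subset_range_cdf (μ : Measure ℝ) [IsProbabilityMeasure μ] [NullSingletonClass μ] :
    Set.Ioo 0 1 ⊆ Set.range (cdf μ) := fun _ hp ↦
  mem_range_of_exists_le_of_exists_ge (continuous_cdf μ)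
    ((tendsto_cdf_atBot μ).eventually_le_const hp.1).exists
    ((tendsto_cdf_atTop μ).eventually_const_le hp.2).exists

theorem Phi_eq_cdf : Phi = cdf (gaussianReal 0 1) :=
  funext fun x ↦ (cdf_eq_real _ x).symm

theorem monotone_Phi : Monotone Phi := Phi_eq_cdf ▸ monotone_cdf _

theorem Phi_PhiInv {p : ℝ} (hp : p ∈ Set.Ioo (0 : ℝ) 1) : Phi (PhiInv p) = p := by
  have := nullSingletonClass_gaussianReal (μ := 0) one_ne_zero
  refine Function.invFun_eq ?_
  rw [Phi_eq_cdf]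
  exact Ioo_subset_range_cdf _ hp

theorem Phi_neg (t : ℝ) : Phi (-t) = 1 - Phi t := by
  have := nullSingletonClass_gaussianReal (μ := 0) one_ne_zero
  have hneg : (gaussianReal 0 1).map (fun x ↦ -x) = gaussianReal 0 1 := by
    rw [gaussianReal_map_neg, neg_zero]
  calc (gaussianReal 0 1).real (Set.Iic (-t))
    _ = ((gaussianReal 0 1).map fun x ↦ -x).real (Set.Iic (-t)) := by rw [hneg]
    _ = (gaussianReal 0 1).real (Set.Ici t) := by
      rw [map_measureReal_apply measurable_neg measurableSet_Iic, Set.neg_preimage, Set.neg_Iic,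
        neg_neg]
    _ = (gaussianReal 0 1).real (Set.Iic t)ᶜ := by
      rw [Set.compl_Iic]; exact measureReal_congr Ioi_ae_eq_Ici.symm
    _ = 1 - (gaussianReal 0 1).real (Set.Iic t) := probReal_compl_eq_one_sub measurableSet_Iic

theorem gaussianReal_real_Iic (m c : ℝ) {σ : ℝ} (hσ : 0 < σ) :
    (gaussianReal m (σ ^ 2).toNNReal).real (Set.Iic c) = Phi ((c - m) / σ) := by
  have hmap : (gaussianReal 0 1).map (fun x ↦ m + σ * x) = gaussianReal m (σ ^ 2).toNNReal := by
    have hcomp : (fun x ↦ m + σ * x) = (m + ·) ∘ (σ * ·) := rfl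
    rw [hcomp, ← Measure.map_map (by fun_prop) (by fun_prop), gaussianReal_map_const_mul,
      gaussianReal_map_const_add, mul_zero, zero_add, mul_one,
      Real.toNNReal_of_nonneg (sq_nonneg σ)]
  have hpre : (fun x ↦ m + σ * x) ⁻¹' Set.Iic c = Set.Iic ((c - m) / σ) := by
    ext x
    rw [Set.mem_preimage, Set.mem_Iic, Set.mem_Iic, le_div_iff₀' hσ, le_sub_iff_add_le']
  rw [← hmap, map_measureReal_apply (by fun_prop) measurableSet_Iic, hpre]
  rfl

end StdNormalCDF

section GaussianProduct

theorem gaussianReal_add_mean (m a : ℝ) {s : ℝ≥0} (hs : s ≠ 0) :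
    gaussianReal (m + a) s = (gaussianReal m s).withDensity
      fun x ↦ ENNReal.ofReal (rexp (a * (x - m) / s - a ^ 2 / (2 * s))) := by
  rw [gaussianReal_of_var_ne_zero _ hs, gaussianReal_of_var_ne_zero _ hs,
    ← withDensity_mul _ (measurable_gaussianPDF _ _) (by fun_prop)]
  congr 1 with x
  rw [Pi.mul_apply, gaussianPDF, gaussianPDF, ← ENNReal.ofReal_mul (gaussianPDFReal_nonneg _ _ _),
    gaussianPDFReal, gaussianPDFReal, mul_assoc (√(2 * π * s))⁻¹, ← Real.exp_add]
  congr 3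
  have : (s : ℝ) ≠ 0 := NNReal.coe_ne_zero.2 hs
  field_simp
  ring

theorem map_dotProduct_pi_gaussianReal {ι : Type*} [Fintype ι] (w m : ι → ℝ) (s : ι → ℝ≥0) :
    (Measure.pi fun i ↦ gaussianReal (m i) (s i)).map (w ⬝ᵥ ·) =
      gaussianReal (w ⬝ᵥ m) (∑ i, w i ^ 2 * s i).toNNReal := by
  set P := Measure.pi fun i ↦ gaussianReal (m i) (s i)
  have hmem (i : ι) : MemLp (fun x ↦ w i * x) 2 (gaussianReal (m i) (s i)) :=
    (memLp_id_gaussianReal 2).const_mul (w i)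
  have hindep : iIndepFun (fun i (z : ι → ℝ) ↦ w i * z i) P :=
    iIndepFun_pi fun i ↦ (hmem i).aemeasurable
  have hgauss (i : ι) : HasGaussianLaw (fun z : ι → ℝ ↦ w i * z i) P :=
    have hlaw : HasLaw (fun z : ι → ℝ ↦ z i) (gaussianReal (m i) (s i)) P :=
      (measurePreserving_eval (fun i ↦ gaussianReal (m i) (s i)) i).hasLaw
    (gaussianReal_const_mul hlaw (w i)).hasGaussianLaw
  have hmean : ∫ z, w ⬝ᵥ z ∂P = w ⬝ᵥ m := by
    simp only [dotProduct]
    rw [integral_finsetSum _ fun i _ ↦ (hgauss i).integrable]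
    refine Finset.sum_congr rfl fun i _ ↦ ?_
    rw [integral_const_mul, integral_eval, integral_id_gaussianReal]
  have hvar : Var[(w ⬝ᵥ ·); P] = ∑ i, w i ^ 2 * s i := by
    have hsum : (w ⬝ᵥ ·) = ∑ i, fun z : ι → ℝ ↦ w i * z i := by ext; simp [dotProduct]
    rw [hsum, variance_sum_pi hmem]
    exact Finset.sum_congr rfl fun i _ ↦ by rw [variance_const_mul, variance_fun_id_gaussianReal]
  rw [← hmean, ← hvar]
  exact (hindep.hasGaussianLaw hgauss).fun_sum.map_eq_gaussianReal

variable {d : ℕ}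

instance (v : Fin d → ℝ) (s : ℝ≥0) : IsProbabilityMeasure (gaussPi d v s) := by
  unfold gaussPi; infer_instance

theorem map_const_add_gaussPi (x v : Fin d → ℝ) (s : ℝ≥0) :
    (gaussPi d v s).map (x + ·) = gaussPi d (x + v) s := by
  have h := Measure.pi_map_pi (μ := fun i ↦ gaussianReal (v i) s) (f := fun i ↦ (x i + ·))
    fun i ↦ by fun_prop
  simp only [gaussianReal_map_const_add, add_comm (v _)] at h
  exact h

theorem gaussPi_add_mean (v e : Fin d → ℝ) {s : ℝ≥0} (hs : s ≠ 0) :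
    gaussPi d (v + e) s = (gaussPi d v s).withDensity
      fun z ↦ ENNReal.ofReal (rexp (e ⬝ᵥ (z - v) / s - e ⬝ᵥ e / (2 * s))) := by
  have hdensity (i : Fin d) := gaussianReal_add_mean (v i) (e i) hs
  have (i : Fin d) : SigmaFinite ((gaussianReal (v i) s).withDensity
      fun x ↦ ENNReal.ofReal (rexp (e i * (x - v i) / s - e i ^ 2 / (2 * s)))) := by
    rw [← hdensity]; infer_instance
  simp only [gaussPi, Pi.add_apply, hdensity]
  rw [pi_withDensity fun i ↦ by fun_prop]
  congr 1 with z
  rw [← ENNReal.ofReal_prod_of_nonneg fun i _ ↦ (Real.exp_pos _).le, ← Real.exp_sum,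
    Finset.sum_sub_distrib, ← Finset.sum_div, ← Finset.sum_div]
  simp only [dotProduct, Pi.sub_apply, sq]

theorem dotProduct_self_eq_l2norm_sq (e : Fin d → ℝ) : e ⬝ᵥ e = l2norm e ^ 2 := by
  rw [l2norm, Real.sq_sqrt (Finset.sum_nonneg fun i _ ↦ sq_nonneg _)]
  exact Finset.sum_congr rfl fun i _ ↦ (sq _).symm

theorem l2norm_pos {e : Fin d → ℝ} (he : e ≠ 0) : 0 < l2norm e := by
  have hne : l2norm e ≠ 0 := fun h ↦ he <| dotProduct_self_eq_zero.1 <| by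
    rw [dotProduct_self_eq_l2norm_sq, h, zero_pow two_ne_zero]
  exact (Real.sqrt_nonneg _).lt_of_ne' hne

theorem gaussPi_real_halfSpace (v : Fin d → ℝ) {e : Fin d → ℝ} (he : e ≠ 0) {σ : ℝ} (hσ : 0 < σ)
    (c : ℝ) :
    (gaussPi d v (σ ^ 2).toNNReal).real {z | e ⬝ᵥ z ≤ c} =
      Phi ((c - e ⬝ᵥ v) / (σ * l2norm e)) := by
  have hvar : ∑ i, e i ^ 2 * ((σ ^ 2).toNNReal : ℝ) = (σ * l2norm e) ^ 2 := by
    rw [← Finset.sum_mul, Real.coe_toNNReal _ (sq_nonneg σ), mul_pow,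
      ← dotProduct_self_eq_l2norm_sq, mul_comm]
    simp only [dotProduct, sq]
  rw [← gaussianReal_real_Iic _ _ (mul_pos hσ (l2norm_pos he)), ← hvar,
    ← map_dotProduct_pi_gaussianReal,
    map_measureReal_apply (by unfold dotProduct; fun_prop) measurableSet_Iic]
  rfl

end GaussianProduct

section Certificate

variable {d : ℕ} {σ : ℝ} {A B : Set (Fin d → ℝ)}

theorem gaussPi_add_mean_halfSpace_le (v e : Fin d → ℝ) {s : ℝ≥0} (hs : s ≠ 0)
    (hA : MeasurableSet A) {c : ℝ}
    (hHA : gaussPi d v s {z | e ⬝ᵥ z ≤ c} ≤ gaussPi d v s A) :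
    gaussPi d (v + e) s {z | e ⬝ᵥ z ≤ c} ≤ gaussPi d (v + e) s A := by
  have hH : MeasurableSet {z | e ⬝ᵥ z ≤ c} :=
    measurableSet_le (by unfold dotProduct; fun_prop) measurable_const
  rw [gaussPi_add_mean v e hs]
  refine neyman_pearson_withDensity hH hA
    (k := .ofReal (rexp ((c - e ⬝ᵥ v) / s - e ⬝ᵥ e / (2 * s))))
    (fun z hz ↦ ?_) (fun z hz ↦ ?_) (measure_ne_top _ _) hHA
  · rw [dotProduct_sub]
    gcongr
    exact hz
  · rw [dotProduct_sub]
    gcongr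
    exact (not_le.1 hz).le

theorem Phi_sub_le_gaussPi_add_mean (v e : Fin d → ℝ) (hσ : 0 < σ) (hA : MeasurableSet A) {t : ℝ}
    (ht : Phi t ≤ (gaussPi d v (σ ^ 2).toNNReal).real A) :
    Phi (t - l2norm e / σ) ≤ (gaussPi d (v + e) (σ ^ 2).toNNReal).real A := by
  rcases eq_or_ne e 0 with rfl | he
  · simpa [l2norm] using ht
  have hs : (σ ^ 2).toNNReal ≠ 0 := (Real.toNNReal_pos.2 (pow_pos hσ 2)).ne'
  have hn : 0 < l2norm e := l2norm_pos he
  set c : ℝ := σ * l2norm e * t + e ⬝ᵥ v with hc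
  have hH_v : (gaussPi d v (σ ^ 2).toNNReal).real {z | e ⬝ᵥ z ≤ c} = Phi t := by
    rw [gaussPi_real_halfSpace v he hσ, hc]
    congr 1
    field_simp
    ring
  have hH_ve : (gaussPi d (v + e) (σ ^ 2).toNNReal).real {z | e ⬝ᵥ z ≤ c} =
      Phi (t - l2norm e / σ) := by
    rw [gaussPi_real_halfSpace _ he hσ, hc, dotProduct_add, dotProduct_self_eq_l2norm_sq]
    congr 1
    field_simp
    ring
  rw [← hH_ve]
  refine ENNReal.toReal_mono (measure_ne_top _ _) (gaussPi_add_mean_halfSpace_le v e hs hA ?_)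
  exact (ENNReal.toReal_le_toReal (measure_ne_top _ _) (measure_ne_top _ _)).1 (hH_v.trans_le ht)

theorem gaussPi_add_mean_le_Phi_add (v e : Fin d → ℝ) (hσ : 0 < σ) (hB : MeasurableSet B) {t : ℝ}
    (ht : (gaussPi d v (σ ^ 2).toNNReal).real B ≤ Phi t) :
    (gaussPi d (v + e) (σ ^ 2).toNNReal).real B ≤ Phi (t + l2norm e / σ) := by
  have hcompl : Phi (-t - l2norm e / σ) ≤ (gaussPi d (v + e) (σ ^ 2).toNNReal).real Bᶜ :=
    Phi_sub_le_gaussPi_add_mean v e hσ hB.compl <| by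
      rw [Phi_neg, probReal_compl_eq_one_sub hB]
      exact sub_le_sub_left ht 1
  rw [← neg_add', Phi_neg, probReal_compl_eq_one_sub hB] at hcompl
  exact (sub_le_sub_iff_left 1).1 hcompl

theorem gaussPi_add_mean_le_of_l2norm_le (v : Fin d → ℝ) {e : Fin d → ℝ} (hσ : 0 < σ)
    (hA : MeasurableSet A) (hB : MeasurableSet B) {t u : ℝ}
    (ht : Phi t ≤ (gaussPi d v (σ ^ 2).toNNReal).real A)
    (hu : (gaussPi d v (σ ^ 2).toNNReal).real B ≤ Phi u) (he : l2norm e ≤ σ / 2 * (t - u)) :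
    (gaussPi d (v + e) (σ ^ 2).toNNReal).real B ≤
      (gaussPi d (v + e) (σ ^ 2).toNNReal).real A := by
  have hshift : u + l2norm e / σ ≤ t - l2norm e / σ := by
    have : l2norm e / σ ≤ (t - u) / 2 := (div_le_iff₀ hσ).2 (by linarith)
    linarith
  calc (gaussPi d (v + e) (σ ^ 2).toNNReal).real B
    _ ≤ Phi (u + l2norm e / σ) := gaussPi_add_mean_le_Phi_add v e hσ hB hu
    _ ≤ Phi (t - l2norm e / σ) := monotone_Phi hshift
    _ ≤ (gaussPi d (v + e) (σ ^ 2).toNNReal).real A := Phi_sub_le_gaussPi_add_mean v e hσ hA ht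

theorem rs_certificate_l2_general {Y : Type*} [MeasurableSpace Y] [MeasurableSingletonClass Y]
    (g : (Fin d → ℝ) → Y) (hg : Measurable g) (hσ : 0 < σ) (X : Fin d → ℝ) (yPlus : Y)
    {pPlus pMinus : ℝ} (hpPlus : pPlus ∈ Set.Ioo (0 : ℝ) 1) (hpMinus : pMinus ∈ Set.Ioo (0 : ℝ) 1)
    (hplus : pPlus ≤ (gaussPi d 0 (σ ^ 2).toNNReal).real {z | g (X + z) = yPlus})
    (hminus : ∀ y ≠ yPlus, (gaussPi d 0 (σ ^ 2).toNNReal).real {z | g (X + z) = y} ≤ pMinus)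
    {e : Fin d → ℝ} (he : l2norm e ≤ σ / 2 * (PhiInv pPlus - PhiInv pMinus)) (y : Y) :
    (gaussPi d 0 (σ ^ 2).toNNReal).real {z | g (X + e + z) = y} ≤
      (gaussPi d 0 (σ ^ 2).toNNReal).real {z | g (X + e + z) = yPlus} := by
  rcases eq_or_ne y yPlus with rfl | hy
  · exact le_rfl
  have hfiber (y : Y) : MeasurableSet (g ⁻¹' {y}) := hg (measurableSet_singleton y)
  have hclass (x : Fin d → ℝ) (y : Y) : (gaussPi d 0 (σ ^ 2).toNNReal).real {z | g (x + z) = y} =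
      (gaussPi d x (σ ^ 2).toNNReal).real (g ⁻¹' {y}) := by
    nth_rw 2 [← add_zero x]
    rw [← map_const_add_gaussPi, map_measureReal_apply (measurable_const_add x) (hfiber y)]
    rfl
  simp only [hclass] at hplus hminus ⊢
  refine gaussPi_add_mean_le_of_l2norm_le X hσ (hfiber yPlus) (hfiber y) ?_ ?_ he
  · rwa [Phi_PhiInv hpPlus]
  · rw [Phi_PhiInv hpMinus]
    exact hminus y hy

end Certificate

/-- **Randomized smoothing certificate (L₂, from f-DP).**
For a measurable base classifier `g : ℝ^d → Y` smoothed with Gaussian noise `N(0, σ²I_d)`,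
if `P(g(X+z) = y₊) ≥ p₊ ≥ p₋ ≥ max_{y ≠ y₊} P(g(X+z) = y)` then for every perturbation `e`
with `‖e‖₂ ≤ (σ/2)(Φ⁻¹(p₊) − Φ⁻¹(p₋))`, `y₊` remains a most probable class of the smoothed
classifier at `X + e`. -/
theorem rs_certificate_l2 {d : ℕ} {Y : Type*} [Fintype Y] [MeasurableSpace Y]
    [MeasurableSingletonClass Y]
    (g : (Fin d → ℝ) → Y) (hg : Measurable g) (σ : ℝ) (hσ : 0 < σ)
    (X : Fin d → ℝ) (yPlus : Y) (pPlus pMinus : ℝ)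
    (hpPlus : pPlus ∈ Set.Ioo (0 : ℝ) 1) (hpMinus : pMinus ∈ Set.Ioo (0 : ℝ) 1)
    (hplus : ((gaussPi d 0 (σ ^ 2).toNNReal) {z | g (X + z) = yPlus}).toReal ≥ pPlus)
    (horder : pPlus ≥ pMinus)
    (hminus : ∀ y : Y, y ≠ yPlus →
      ((gaussPi d 0 (σ ^ 2).toNNReal) {z | g (X + z) = y}).toReal ≤ pMinus) :
    ∀ e : Fin d → ℝ, l2norm e ≤ σ / 2 * (PhiInv pPlus - PhiInv pMinus) → ∀ y : Y,
      ((gaussPi d 0 (σ ^ 2).toNNReal) {z | g (X + e + z) = yPlus}).toReal ≥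
        ((gaussPi d 0 (σ ^ 2).toNNReal) {z | g (X + e + z) = y}).toReal := fun _ he y ↦
  rs_certificate_l2_general g hg hσ X yPlus hpPlus hpMinus hplus hminus he y
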